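/- arXiv:2406.03955 — 2 statements merged into one kernel-verified Lean document; each statement's English description precedes it below -/
import Mathlib

section
/- The Taylor differential is a graded derivation of the Taylor product: for all subsets σ, τ ⊆ {1,…,k}, d(e_σ ⋆ e_τ) = d(e_σ) ⋆ e_τ + (−1)^{card(σ)} e_σ ⋆ d(e_τ), where ⋆ is extended O-bilinearly to C. -/
/-- `A_τ`: the pointwise maximum of the exponent vectors `a i`, `i ∈ τ`
(so that `m_τ = x^{A_τ}` is the lcm of the monomials `φ_i = x^{a i}`, `i ∈ τ`). -/
def texp {n k : ℕ} (a : Fin k → Fin n → ℕ) (τ : Finset (Fin k)) : Fin n → ℕ :=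
  fun v => τ.sup fun i => a i v

/-- the monic monomial `x^f` with exponent vector `f`. -/
noncomputable def monOf (K : Type*) [Field K] {n : ℕ} (f : Fin n → ℕ) :
    MvPolynomial (Fin n) K :=
  MvPolynomial.monomial (Finsupp.equivFunOnFinite.symm f) 1

/-- the Taylor product on basis elements:
`e_σ ⋆ e_τ = (−1)^{card{(i,j)∈σ×τ : i>j}} (m_σ m_τ / m_{σ∪τ}) e_{σ∪τ}` if
`σ ∩ τ = ∅`, and `0` otherwise. -/
noncomputable def taylorStarBasis (K : Type*) [Field K] {n k : ℕ}
    (a : Fin k → Fin n → ℕ) (σ τ : Finset (Fin k)) :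
    Finset (Fin k) →₀ MvPolynomial (Fin n) K :=
  if σ ∩ τ = ∅ then
    ((-1 : MvPolynomial (Fin n) K) ^ ((σ ×ˢ τ).filter fun p => p.2 < p.1).card *
        monOf K fun v => texp a σ v + texp a τ v - texp a (σ ∪ τ) v) •
      Finsupp.single (σ ∪ τ) 1
  else 0

/-- the Taylor product, extended `O`-bilinearly. -/
noncomputable def taylorStar (K : Type*) [Field K] {n k : ℕ} (a : Fin k → Fin n → ℕ) :
    (Finset (Fin k) →₀ MvPolynomial (Fin n) K) →ₗ[MvPolynomial (Fin n) K]
      (Finset (Fin k) →₀ MvPolynomial (Fin n) K) →ₗ[MvPolynomial (Fin n) K]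
        (Finset (Fin k) →₀ MvPolynomial (Fin n) K) :=
  Finsupp.lsum (MvPolynomial (Fin n) K) fun σ =>
    LinearMap.toSpanSingleton (MvPolynomial (Fin n) K) _
      (Finsupp.lsum (MvPolynomial (Fin n) K) fun τ =>
        LinearMap.toSpanSingleton (MvPolynomial (Fin n) K) _ (taylorStarBasis K a σ τ))


/-- value of the Taylor differential on the basis element `e_τ`:
`d e_τ = Σ_{j∈τ} (−1)^{card{i∈τ : i<j}} x^{A_τ − A_{τ∖{j}}} e_{τ∖{j}}`. -/
noncomputable def taylorDval (K : Type*) [Field K] {n k : ℕ} (a : Fin k → Fin n → ℕ)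
    (τ : Finset (Fin k)) : Finset (Fin k) →₀ MvPolynomial (Fin n) K :=
  ∑ j ∈ τ, ((-1 : MvPolynomial (Fin n) K) ^ (τ.filter fun i => i < j).card *
      monOf K fun v => texp a τ v - texp a (τ.erase j) v) •
    Finsupp.single (τ.erase j) 1

/-- the Taylor differential `d`, extended `O`-linearly. -/
noncomputable def taylorD (K : Type*) [Field K] {n k : ℕ} (a : Fin k → Fin n → ℕ) :
    (Finset (Fin k) →₀ MvPolynomial (Fin n) K) →ₗ[MvPolynomial (Fin n) K]
      (Finset (Fin k) →₀ MvPolynomial (Fin n) K) :=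
  Finsupp.lsum (MvPolynomial (Fin n) K) fun τ =>
    LinearMap.toSpanSingleton (MvPolynomial (Fin n) K) _ (taylorDval K a τ)

/-!
The rescaling `e_τ ↦ m_τ e_τ` is injective, carries `⋆` to the exterior product `∧` and carries `d`
to the boundary map `∂` of a simplex, so all monomials disappear from the Leibniz rule. What
remains is an identity of signs. With `ε(σ, τ) = (-1) ^ #{(i, j) ∈ σ × τ | j < i}` one has
`e_σ ∧ e_τ = ε(σ, τ) e_{σ ∪ τ}` for disjoint `σ`, `τ`, and `∂ e_τ = ∑ j ∈ τ, ε({j}, τ) e_{τ \ {j}}`,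
and the identity follows because `ε` is multiplicative in both arguments and
`ε(σ, {j}) ε({j}, σ) = (-1) ^ #σ` for `j ∉ σ`. If `σ` and `τ` share an element, the left side is `0`
and the terms of the two sums on the right indexed by `σ ∩ τ` cancel in pairs.
-/

section ShuffleSign

variable (R : Type*) [CommRing R] {ι : Type*} [LinearOrder ι]

/-- The sign `(-1) ^ #{(i, j) ∈ σ × τ | j < i}` of the shuffle sorting the concatenation of `σ`
and `τ`. The product form makes it multiplicative in each argument; see
`shuffleSign_eq_neg_one_pow_card` for the inversion count. -/
def shuffleSign (σ τ : Finset ι) : R :=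
  ∏ i ∈ σ, ∏ j ∈ τ, if j < i then -1 else 1

theorem shuffleSign_eq_neg_one_pow_card (σ τ : Finset ι) :
    shuffleSign R σ τ = (-1) ^ ((σ ×ˢ τ).filter fun p => p.2 < p.1).card := by
  rw [shuffleSign, ← Finset.prod_product', ← Finset.prod_filter, Finset.prod_const]

theorem shuffleSign_singleton_left (j : ι) (τ : Finset ι) :
    shuffleSign R {j} τ = (-1) ^ (τ.filter fun i => i < j).card := by
  rw [shuffleSign, Finset.prod_singleton, ← Finset.prod_filter, Finset.prod_const]

theorem shuffleSign_mul_self (σ τ : Finset ι) :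
    shuffleSign R σ τ * shuffleSign R σ τ = 1 := by
  rw [shuffleSign_eq_neg_one_pow_card, ← mul_pow, neg_one_mul, neg_neg, one_pow]

theorem shuffleSign_union_right (σ : Finset ι) {τ υ : Finset ι} (h : Disjoint τ υ) :
    shuffleSign R σ (τ ∪ υ) = shuffleSign R σ τ * shuffleSign R σ υ := by
  simp only [shuffleSign, Finset.prod_union h, Finset.prod_mul_distrib]

theorem shuffleSign_singleton_mul_erase_left {σ : Finset ι} (τ : Finset ι) {j : ι} (hj : j ∈ σ) :
    shuffleSign R {j} τ * shuffleSign R (σ.erase j) τ = shuffleSign R σ τ := by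
  simp only [shuffleSign, Finset.prod_singleton]
  exact Finset.mul_prod_erase σ (fun i => ∏ l ∈ τ, if l < i then (-1 : R) else 1) hj

theorem shuffleSign_singleton_mul_erase_right (σ : Finset ι) {τ : Finset ι} {j : ι} (hj : j ∈ τ) :
    shuffleSign R σ {j} * shuffleSign R σ (τ.erase j) = shuffleSign R σ τ := by
  simp only [shuffleSign, Finset.prod_singleton, ← Finset.prod_mul_distrib]
  exact Finset.prod_congr rfl fun i _ =>
    Finset.mul_prod_erase τ (fun l => if l < i then (-1 : R) else 1) hj

theorem shuffleSign_singleton_erase (τ : Finset ι) (j : ι) :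
    shuffleSign R {j} (τ.erase j) = shuffleSign R {j} τ := by
  simp only [shuffleSign, Finset.prod_singleton]
  exact Finset.prod_erase τ (if_neg (lt_irrefl j))

theorem shuffleSign_singleton_mul_swap {σ : Finset ι} {j : ι} (hj : j ∉ σ) :
    shuffleSign R σ {j} * shuffleSign R {j} σ = (-1) ^ σ.card := by
  simp only [shuffleSign, Finset.prod_singleton, ← Finset.prod_mul_distrib]
  refine Finset.prod_eq_pow_card fun i hi => ?_
  rcases lt_or_gt_of_ne (ne_of_mem_of_not_mem hi hj) with h | h <;> simp [h, h.not_gt]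

theorem shuffleSign_mul_union_of_mem_left {σ τ : Finset ι} (h : Disjoint σ τ) {j : ι}
    (hj : j ∈ σ) :
    shuffleSign R σ τ * shuffleSign R {j} (σ ∪ τ) =
      shuffleSign R {j} σ * shuffleSign R (σ.erase j) τ := by
  rw [shuffleSign_union_right R _ h, ← shuffleSign_singleton_mul_erase_left R τ hj]
  linear_combination shuffleSign R {j} σ * shuffleSign R (σ.erase j) τ *
    shuffleSign_mul_self R {j} τ

theorem shuffleSign_mul_union_of_mem_right {σ τ : Finset ι} (h : Disjoint σ τ) {j : ι}
    (hj : j ∈ τ) :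
    shuffleSign R σ τ * shuffleSign R {j} (σ ∪ τ) =
      (-1) ^ σ.card * (shuffleSign R {j} τ * shuffleSign R σ (τ.erase j)) := by
  rw [shuffleSign_union_right R _ h, ← shuffleSign_singleton_mul_erase_right R σ hj,
    ← shuffleSign_singleton_mul_swap R (Finset.disjoint_right.mp h hj)]
  ring

theorem shuffleSign_mul_erase_add_eq_zero {σ τ : Finset ι} {j : ι} (hσ : j ∈ σ) (hτ : j ∈ τ) :
    shuffleSign R {j} σ * shuffleSign R (σ.erase j) τ +
      (-1) ^ σ.card * (shuffleSign R {j} τ * shuffleSign R σ (τ.erase j)) = 0 := by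
  have swap := shuffleSign_singleton_mul_swap R (Finset.notMem_erase j σ)
  rw [shuffleSign_singleton_erase] at swap
  rw [← shuffleSign_singleton_mul_erase_right R (σ.erase j) hτ,
    ← shuffleSign_singleton_mul_erase_left R (τ.erase j) hσ, shuffleSign_singleton_erase,
    ← Finset.card_erase_add_one hσ, pow_succ]
  linear_combination shuffleSign R (σ.erase j) (τ.erase j) * swap -
    (-1) ^ (σ.erase j).card * shuffleSign R (σ.erase j) (τ.erase j) *
      shuffleSign_mul_self R {j} τ

end ShuffleSign

section Exterior

open Finsupp

variable (R : Type*) [CommRing R] {ι : Type*} [LinearOrder ι]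

/-- The exterior product on the free module with basis the finite subsets of `ι`, where `σ` stands
for the wedge of the elements of `σ` in increasing order. -/
noncomputable def wedge : (Finset ι →₀ R) →ₗ[R] (Finset ι →₀ R) →ₗ[R] (Finset ι →₀ R) :=
  linearCombination R fun σ => linearCombination R fun τ =>
    if Disjoint σ τ then single (σ ∪ τ) (shuffleSign R σ τ) else 0

/-- The augmented boundary map of the full simplex on `ι`, where `τ` stands for the face with
vertices `τ`; equivalently, the contraction of the exterior algebra with the functional taking
every basis vector to `1`. -/
noncomputable def simplexBoundary : (Finset ι →₀ R) →ₗ[R] (Finset ι →₀ R) :=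
  linearCombination R fun τ => ∑ j ∈ τ, single (τ.erase j) (shuffleSign R {j} τ)

theorem simplexBoundary_single (τ : Finset ι) (r : R) :
    simplexBoundary R (single τ r) =
      ∑ j ∈ τ, single (τ.erase j) (r * shuffleSign R {j} τ) := by
  simp [simplexBoundary, Finset.smul_sum]

variable {R}

theorem wedge_single_of_disjoint {σ τ : Finset ι} (h : Disjoint σ τ) (r s : R) :
    wedge R (single σ r) (single τ s) = single (σ ∪ τ) (r * s * shuffleSign R σ τ) := by
  simp only [wedge, linearCombination_single, LinearMap.smul_apply, if_pos h, smul_single,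
    smul_eq_mul, mul_assoc]

theorem wedge_single_of_not_disjoint {σ τ : Finset ι} (h : ¬Disjoint σ τ) (r s : R) :
    wedge R (single σ r) (single τ s) = 0 := by
  simp [wedge, h]

theorem simplexBoundary_wedge_single_of_disjoint {σ τ : Finset ι} (h : Disjoint σ τ) (r s : R) :
    simplexBoundary R (wedge R (single σ r) (single τ s)) =
      wedge R (simplexBoundary R (single σ r)) (single τ s) +
        (-1 : R) ^ σ.card • wedge R (single σ r) (simplexBoundary R (single τ s)) := by
  simp only [wedge_single_of_disjoint h, simplexBoundary_single, map_sum, LinearMap.sum_apply,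
    Finset.sum_union h, Finset.smul_sum]
  congr 1 <;> refine Finset.sum_congr rfl fun j hj => ?_
  · have union_erase : (σ ∪ τ).erase j = σ.erase j ∪ τ := by
      rw [Finset.erase_union_distrib, Finset.erase_eq_of_notMem (Finset.disjoint_left.mp h hj)]
    rw [wedge_single_of_disjoint (h.mono_left (Finset.erase_subset j σ)), union_erase]
    congr 1
    linear_combination r * s * shuffleSign_mul_union_of_mem_left R h hj
  · have union_erase : (σ ∪ τ).erase j = σ ∪ τ.erase j := by
      rw [Finset.erase_union_distrib, Finset.erase_eq_of_notMem (Finset.disjoint_right.mp h hj)]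
    rw [wedge_single_of_disjoint (h.mono_right (Finset.erase_subset j τ)), union_erase,
      smul_single, smul_eq_mul]
    congr 1
    linear_combination r * s * shuffleSign_mul_union_of_mem_right R h hj

theorem wedge_single_erase_add_eq_zero {σ τ : Finset ι} {j : ι} (hσ : j ∈ σ) (hτ : j ∈ τ)
    (r s : R) :
    wedge R (single (σ.erase j) (r * shuffleSign R {j} σ)) (single τ s) +
      (-1 : R) ^ σ.card •
        wedge R (single σ r) (single (τ.erase j) (s * shuffleSign R {j} τ)) = 0 := by
  by_cases h : Disjoint (σ.erase j) τ
  · rw [wedge_single_of_disjoint h, wedge_single_of_disjoint (Finset.disjoint_erase_comm.mp h),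
      Finset.erase_union_of_mem hτ, Finset.union_erase_of_mem hσ, smul_single, ← single_add,
      smul_eq_mul, single_eq_zero]
    linear_combination r * s * shuffleSign_mul_erase_add_eq_zero R hσ hτ
  · rw [wedge_single_of_not_disjoint h,
      wedge_single_of_not_disjoint (mt Finset.disjoint_erase_comm.mpr h), smul_zero, add_zero]

theorem wedge_simplexBoundary_add_eq_zero {σ τ : Finset ι} (h : ¬Disjoint σ τ) (r s : R) :
    wedge R (simplexBoundary R (single σ r)) (single τ s) +
      (-1 : R) ^ σ.card • wedge R (single σ r) (simplexBoundary R (single τ s)) = 0 := by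
  have left_vanish : ∀ j ∈ σ, j ∉ σ ∩ τ →
      wedge R (single (σ.erase j) (r * shuffleSign R {j} σ)) (single τ s) = 0 := by
    intro j hσ hj
    have hτ : j ∉ τ := fun hτ => hj (Finset.mem_inter.mpr ⟨hσ, hτ⟩)
    refine wedge_single_of_not_disjoint (fun hd => h ?_) _ _
    rwa [Finset.disjoint_erase_comm, Finset.erase_eq_of_notMem hτ] at hd
  have right_vanish : ∀ j ∈ τ, j ∉ σ ∩ τ →
      wedge R (single σ r) (single (τ.erase j) (s * shuffleSign R {j} τ)) = 0 := by
    intro j hτ hj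
    have hσ : j ∉ σ := fun hσ => hj (Finset.mem_inter.mpr ⟨hσ, hτ⟩)
    refine wedge_single_of_not_disjoint (fun hd => h ?_) _ _
    rwa [← Finset.disjoint_erase_comm, Finset.erase_eq_of_notMem hσ] at hd
  simp only [simplexBoundary_single, map_sum, LinearMap.sum_apply]
  rw [← Finset.sum_subset Finset.inter_subset_left left_vanish,
    ← Finset.sum_subset Finset.inter_subset_right right_vanish, Finset.smul_sum,
    ← Finset.sum_add_distrib]
  refine Finset.sum_eq_zero fun j hj => ?_
  obtain ⟨hσ, hτ⟩ := Finset.mem_inter.mp hj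
  exact wedge_single_erase_add_eq_zero hσ hτ r s

theorem simplexBoundary_wedge_single (σ τ : Finset ι) (r s : R) :
    simplexBoundary R (wedge R (single σ r) (single τ s)) =
      wedge R (simplexBoundary R (single σ r)) (single τ s) +
        (-1 : R) ^ σ.card • wedge R (single σ r) (simplexBoundary R (single τ s)) := by
  by_cases h : Disjoint σ τ
  · exact simplexBoundary_wedge_single_of_disjoint h r s
  · rw [wedge_single_of_not_disjoint h, map_zero, wedge_simplexBoundary_add_eq_zero h]

end Exterior

section Rescaling

open Finsupp

variable (K : Type*) [Field K] {n k : ℕ}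

theorem monOf_ne_zero (f : Fin n → ℕ) : monOf K f ≠ 0 :=
  MvPolynomial.monomial_eq_zero.not.mpr one_ne_zero

theorem monOf_add (f g : Fin n → ℕ) : monOf K (f + g) = monOf K f * monOf K g := by
  rw [monOf, monOf, monOf, MvPolynomial.monomial_mul, one_mul]
  exact congrArg (MvPolynomial.monomial · 1) (Finsupp.ext fun _ => rfl)

theorem monOf_sub_mul {f g : Fin n → ℕ} (h : g ≤ f) :
    monOf K (f - g) * monOf K g = monOf K f := by
  rw [← monOf_add, tsub_add_cancel_of_le h]

theorem texp_mono (a : Fin k → Fin n → ℕ) : Monotone (texp a) :=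
  fun _ _ h _ => Finset.sup_mono h

theorem texp_union_le_add (a : Fin k → Fin n → ℕ) (σ τ : Finset (Fin k)) :
    texp a (σ ∪ τ) ≤ texp a σ + texp a τ := by
  intro v
  rw [texp, Finset.sup_union]
  exact max_le_add_of_nonneg (Nat.zero_le _) (Nat.zero_le _)

/-- The rescaling `e_τ ↦ m_τ e_τ`, which embeds the Taylor complex with its product into the
chain complex of the full simplex with the exterior product. -/
noncomputable def taylorRescale (a : Fin k → Fin n → ℕ) :
    (Finset (Fin k) →₀ MvPolynomial (Fin n) K) →ₗ[MvPolynomial (Fin n) K]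
      (Finset (Fin k) →₀ MvPolynomial (Fin n) K) :=
  linearCombination _ fun τ => single τ (monOf K (texp a τ))

theorem taylorRescale_injective (a : Fin k → Fin n → ℕ) :
    Function.Injective (taylorRescale K a) :=
  linearIndependent_single_of_ne_zero fun τ => monOf_ne_zero K (texp a τ)

theorem taylorRescale_single (a : Fin k → Fin n → ℕ) (τ : Finset (Fin k))
    (r : MvPolynomial (Fin n) K) :
    taylorRescale K a (single τ r) = single τ (r * monOf K (texp a τ)) := by
  simp [taylorRescale]

theorem taylorRescale_taylorDval (a : Fin k → Fin n → ℕ) (τ : Finset (Fin k)) :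
    taylorRescale K a (taylorDval K a τ) =
      simplexBoundary _ (single τ (monOf K (texp a τ))) := by
  rw [taylorDval, map_sum, simplexBoundary_single]
  refine Finset.sum_congr rfl fun j _ => ?_
  have cofactor_mul : (monOf K fun v => texp a τ v - texp a (τ.erase j) v) *
      monOf K (texp a (τ.erase j)) = monOf K (texp a τ) :=
    monOf_sub_mul K (texp_mono a (Finset.erase_subset j τ))
  rw [map_smul, taylorRescale_single, smul_single, smul_eq_mul, shuffleSign_singleton_left,
    one_mul, mul_assoc, cofactor_mul, mul_comm]

theorem taylorRescale_taylorStarBasis (a : Fin k → Fin n → ℕ) (σ τ : Finset (Fin k)) :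
    taylorRescale K a (taylorStarBasis K a σ τ) =
      wedge _ (single σ (monOf K (texp a σ))) (single τ (monOf K (texp a τ))) := by
  by_cases h : Disjoint σ τ
  · have cofactor_mul : (monOf K fun v => texp a σ v + texp a τ v - texp a (σ ∪ τ) v) *
        monOf K (texp a (σ ∪ τ)) = monOf K (texp a σ) * monOf K (texp a τ) :=
      (monOf_sub_mul K (texp_union_le_add a σ τ)).trans (monOf_add K _ _)
    rw [taylorStarBasis, if_pos (Finset.disjoint_iff_inter_eq_empty.mp h),
      wedge_single_of_disjoint h, map_smul, taylorRescale_single, smul_single, smul_eq_mul,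
      shuffleSign_eq_neg_one_pow_card, one_mul, mul_assoc, cofactor_mul, mul_comm]
  · rw [taylorStarBasis, if_neg (Finset.disjoint_iff_inter_eq_empty.not.mp h),
      wedge_single_of_not_disjoint h, map_zero]

theorem taylorRescale_taylorD (a : Fin k → Fin n → ℕ)
    (x : Finset (Fin k) →₀ MvPolynomial (Fin n) K) :
    taylorRescale K a (taylorD K a x) = simplexBoundary _ (taylorRescale K a x) := by
  suffices h : taylorRescale K a ∘ₗ taylorD K a = simplexBoundary _ ∘ₗ taylorRescale K a from
    LinearMap.congr_fun h x
  ext1 τ; ext1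
  simp [taylorD, taylorRescale_single, taylorRescale_taylorDval]

theorem taylorRescale_taylorStar (a : Fin k → Fin n → ℕ)
    (x y : Finset (Fin k) →₀ MvPolynomial (Fin n) K) :
    taylorRescale K a (taylorStar K a x y) =
      wedge _ (taylorRescale K a x) (taylorRescale K a y) := by
  suffices h : (taylorStar K a).compr₂ (taylorRescale K a) =
      (wedge _).compl₁₂ (taylorRescale K a) (taylorRescale K a) from
    LinearMap.congr_fun₂ h x y
  ext1 σ; ext1; ext1 τ; ext1
  simp [taylorStar, taylorRescale_single, taylorRescale_taylorStarBasis]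

end Rescaling

/-- the Taylor differential is a graded derivation of the
Taylor product: for all `σ, τ ⊆ {1,…,k}`,
`d(e_σ ⋆ e_τ) = d(e_σ) ⋆ e_τ + (−1)^{card σ} e_σ ⋆ d(e_τ)`. -/
theorem stmt_4 {K : Type*} [Field K] {n k : ℕ} (hn : 1 ≤ n) (hk : 1 ≤ k)
    (a : Fin k → Fin n → ℕ) (σ τ : Finset (Fin k)) :
    taylorD K a (taylorStar K a (Finsupp.single σ 1) (Finsupp.single τ 1)) =
      taylorStar K a (taylorD K a (Finsupp.single σ 1)) (Finsupp.single τ 1) +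
        (-1 : MvPolynomial (Fin n) K) ^ σ.card •
          taylorStar K a (Finsupp.single σ 1) (taylorD K a (Finsupp.single τ 1)) := by
  apply taylorRescale_injective K a
  rw [map_add, map_smul, taylorRescale_taylorD]
  simp only [taylorRescale_taylorStar, taylorRescale_taylorD, taylorRescale_single]
  exact simplexBoundary_wedge_single σ τ _ _
end

section
/- Let K be a field, R = K[X,Y]/(XY) with x, y the images of X, Y. On the free R-module M = ⨁_{i≥0} R·e_i define the R-bilinear product e_i ⋆ e_j = μ(i,j)·e_{i+j} and the R-linear map d : M → M by d(e_0) = 0, d(e_i) = y·e_{i−1} for i ≥ 2 even, and d(e_i) = x·e_{i−1} for i odd. Then d is a degree −1 derivation of ⋆: for all i, j ≥ 0, d(e_i ⋆ e_j) = d(e_i) ⋆ e_j + (−1)^i e_i ⋆ d(e_j). -/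
/-- the multiplication table `μ(i,j)` of the two-periodic DGA. -/
def muCoef (i j : ℕ) : ℕ :=
  if Even i then
    if Even j then Nat.choose ((i + j) / 2) (j / 2)
    else Nat.choose ((i + j - 1) / 2) ((j - 1) / 2)
  else
    if Even j then Nat.choose ((i + j - 1) / 2) ((i - 1) / 2)
    else 0

/-- the product `e_i ⋆ e_j = μ(i,j) e_{i+j}` on `M = ⨁_{i≥0} R e_i`, extended
`R`-bilinearly. -/
noncomputable def muProd (R : Type*) [CommRing R] :
    (ℕ →₀ R) →ₗ[R] (ℕ →₀ R) →ₗ[R] (ℕ →₀ R) :=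
  Finsupp.lsum R fun i => LinearMap.toSpanSingleton R ((ℕ →₀ R) →ₗ[R] (ℕ →₀ R))
    (Finsupp.lsum R fun j => LinearMap.toSpanSingleton R (ℕ →₀ R)
      ((muCoef i j : R) • Finsupp.single (i + j) (1 : R)))

/-- the two-periodic differential: `d e_0 = 0`, `d e_i = y e_{i−1}` for even
`i ≥ 2`, and `d e_i = x e_{i−1}` for odd `i`, extended `R`-linearly. -/
noncomputable def twoPerD (R : Type*) [CommRing R] (x y : R) :
    (ℕ →₀ R) →ₗ[R] (ℕ →₀ R) :=
  Finsupp.lsum R fun i => LinearMap.toSpanSingleton R (ℕ →₀ R)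
    (if i = 0 then 0
     else (if Even i then y else x) • Finsupp.single (i - 1) (1 : R))

/-- the ideal `(XY)` of `K[X,Y]`. -/
noncomputable def xyIdeal (K : Type*) [Field K] : Ideal (MvPolynomial (Fin 2) K) :=
  Ideal.span {MvPolynomial.X 0 * MvPolynomial.X 1}

/-- the ring `R = K[X,Y]/(XY)`. -/
abbrev TwoPerRing (K : Type*) [Field K] : Type _ :=
  MvPolynomial (Fin 2) K ⧸ xyIdeal K

/-- `x`, the image of `X` in `R`. -/
noncomputable def xcl (K : Type*) [Field K] : TwoPerRing K :=
  Ideal.Quotient.mk (xyIdeal K) (MvPolynomial.X 0)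

/-- `y`, the image of `Y` in `R`. -/
noncomputable def ycl (K : Type*) [Field K] : TwoPerRing K :=
  Ideal.Quotient.mk (xyIdeal K) (MvPolynomial.X 1)

/-!
As an algebra, `(M, ⋆)` is the divided power algebra on `e_2` tensored with the exterior algebra on
`e_1`: `e_{2n} = γ_n` and `e_{2n+1} = e_1 ⋆ γ_n`. Since `e_0` is a unit killed by `d`, the Leibniz
rule only has to be checked in positive degrees. There it compares coefficients of `e_{i+j-1}`, and
the only parity class that needs more than an equality of binomial coefficients is that of two even
degrees, where it is Pascal's rule.
-/

theorem muCoef_even_even (a b : ℕ) : muCoef (2 * a) (2 * b) = (a + b).choose b := by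
  simp [muCoef, ← mul_add]

theorem muCoef_even_odd (a b : ℕ) : muCoef (2 * a) (2 * b + 1) = (a + b).choose b := by
  simp [muCoef, ← add_assoc, ← mul_add]

theorem muCoef_comm (i j : ℕ) : muCoef i j = muCoef j i := by
  by_cases hi : Even i <;> by_cases hj : Even j
  · obtain ⟨a, rfl⟩ := hi.two_dvd
    obtain ⟨b, rfl⟩ := hj.two_dvd
    rw [muCoef_even_even, muCoef_even_even, add_comm, Nat.choose_symm_add]
  all_goals simp [muCoef, hi, hj, add_comm]

theorem muCoef_odd_even (a b : ℕ) : muCoef (2 * a + 1) (2 * b) = (a + b).choose b := by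
  rw [muCoef_comm, muCoef_even_odd, add_comm b a, Nat.choose_symm_add]

theorem muCoef_odd_odd (a b : ℕ) : muCoef (2 * a + 1) (2 * b + 1) = 0 := by
  simp [muCoef]

theorem muCoef_zero_left (j : ℕ) : muCoef 0 j = 1 := by
  obtain ⟨b, rfl | rfl⟩ := Nat.even_or_odd' j
  · simpa using muCoef_even_even 0 b
  · simpa using muCoef_even_odd 0 b

theorem muCoef_even_even_pascal (a b : ℕ) :
    muCoef (2 * (a + 1)) (2 * (b + 1)) =
      muCoef (2 * a + 1) (2 * (b + 1)) + muCoef (2 * (a + 1)) (2 * b + 1) := by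
  rw [muCoef_even_even, muCoef_odd_even, muCoef_even_odd, ← add_assoc, Nat.choose_succ_succ,
    add_right_comm a 1 b, ← add_assoc a b 1, add_comm]

/-- The coefficient of `e_{i-1}` in `d e_i` for `i ≥ 1`. At `i = 0` it has the junk value `y`. -/
def twoPerCoef {α : Type*} (x y : α) (i : ℕ) : α :=
  if Even i then y else x

theorem twoPerCoef_even {α : Type*} (x y : α) (n : ℕ) : twoPerCoef x y (2 * n) = y := by
  simp [twoPerCoef]

theorem twoPerCoef_odd {α : Type*} (x y : α) (n : ℕ) : twoPerCoef x y (2 * n + 1) = x := by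
  simp [twoPerCoef]

section Leibniz

variable {R : Type*} [CommRing R]

theorem muProd_single (i j : ℕ) (a b : R) :
    muProd R (Finsupp.single i a) (Finsupp.single j b) =
      Finsupp.single (i + j) (a * b * muCoef i j) := by
  simp [muProd, mul_assoc, -Finsupp.single_mul]

theorem muProd_comm (m n : ℕ →₀ R) : muProd R m n = muProd R n m := by
  suffices muProd R = (muProd R).flip from congr($this m n)
  ext i j : 4
  simp [muProd_single, muCoef_comm i j, add_comm i j]

theorem muProd_single_zero_left (a : R) (m : ℕ →₀ R) :
    muProd R (Finsupp.single 0 a) m = a • m := by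
  induction m using Finsupp.induction_linear with
  | zero => simp
  | add m n hm hn => rw [map_add, hm, hn, smul_add]
  | single j b => simp [muProd_single, muCoef_zero_left]

theorem muProd_single_zero_right (a : R) (m : ℕ →₀ R) :
    muProd R m (Finsupp.single 0 a) = a • m := by
  rw [muProd_comm, muProd_single_zero_left]

theorem twoPerD_single_zero (x y a : R) : twoPerD R x y (Finsupp.single 0 a) = 0 := by
  simp [twoPerD]

theorem twoPerD_single_succ (x y a : R) (i : ℕ) :
    twoPerD R x y (Finsupp.single (i + 1) a) =
      Finsupp.single i (a * twoPerCoef x y (i + 1)) := by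
  by_cases hi : Even (i + 1) <;> simp [twoPerD, twoPerCoef, hi, -Finsupp.single_mul]

theorem twoPerCoef_mul_muCoef_succ_succ (x y : R) (i j : ℕ) :
    twoPerCoef x y (i + j + 2) * muCoef (i + 1) (j + 1) =
      twoPerCoef x y (i + 1) * muCoef i (j + 1) +
        (-1) ^ (i + 1) * (twoPerCoef x y (j + 1) * muCoef (i + 1) j) := by
  obtain ⟨a, rfl | rfl⟩ := Nat.even_or_odd' i <;> obtain ⟨b, rfl | rfl⟩ := Nat.even_or_odd' j
  · simp [muCoef_odd_odd, muCoef_even_odd, muCoef_odd_even, twoPerCoef_odd, pow_succ]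
  · have hodd : 2 * a + (2 * b + 1) + 2 = 2 * (a + b + 1) + 1 := by ring
    have heven : 2 * b + 1 + 1 = 2 * (b + 1) := by ring
    rw [hodd, heven, twoPerCoef_odd, twoPerCoef_odd, muCoef_odd_odd, muCoef_odd_even,
      muCoef_even_even]
    simp
  · have hodd : 2 * a + 1 + 2 * b + 2 = 2 * (a + b + 1) + 1 := by ring
    have heven : 2 * a + 1 + 1 = 2 * (a + 1) := by ring
    rw [hodd, heven, twoPerCoef_odd, twoPerCoef_odd, muCoef_odd_odd, muCoef_even_odd,
      muCoef_even_even]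
    simp
  · have hsum : 2 * a + 1 + (2 * b + 1) + 2 = 2 * (a + b + 2) := by ring
    have ha : 2 * a + 1 + 1 = 2 * (a + 1) := by ring
    have hb : 2 * b + 1 + 1 = 2 * (b + 1) := by ring
    rw [hsum, ha, hb, twoPerCoef_even, twoPerCoef_even, twoPerCoef_even, muCoef_even_even_pascal,
      (even_two_mul (a + 1)).neg_one_pow, one_mul, Nat.cast_add, mul_add]

theorem stmt_7_general (x y a b : R) (i j : ℕ) :
    twoPerD R x y (muProd R (Finsupp.single i a) (Finsupp.single j b)) =
      muProd R (twoPerD R x y (Finsupp.single i a)) (Finsupp.single j b) +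
        (-1 : R) ^ i •
          muProd R (Finsupp.single i a) (twoPerD R x y (Finsupp.single j b)) := by
  rcases i with _ | i
  · simp [muProd_single_zero_left, twoPerD_single_zero, -Finsupp.smul_single]
  rcases j with _ | j
  · simp [muProd_single_zero_right, twoPerD_single_zero, -Finsupp.smul_single]
  have hdeg : i + 1 + (j + 1) = i + j + 1 + 1 := by ring
  rw [muProd_single, hdeg, twoPerD_single_succ, twoPerD_single_succ, twoPerD_single_succ,
    muProd_single, muProd_single, ← add_assoc i j 1, add_right_comm i 1 j, Finsupp.smul_single,
    ← Finsupp.single_add, smul_eq_mul]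
  congr 1
  linear_combination a * b * twoPerCoef_mul_muCoef_succ_succ x y i j

end Leibniz

set_option synthInstance.maxHeartbeats 1000000 in
/-- over `R = K[X,Y]/(XY)`, the map `d` is a degree `−1`
derivation of the product `⋆`: for all `i, j ≥ 0`,
`d(e_i ⋆ e_j) = d(e_i) ⋆ e_j + (−1)^i e_i ⋆ d(e_j)`. -/
theorem stmt_7 (K : Type*) [Field K] (i j : ℕ) :
    twoPerD (TwoPerRing K) (xcl K) (ycl K)
        (muProd (TwoPerRing K) (Finsupp.single i 1) (Finsupp.single j 1)) =
      muProd (TwoPerRing K)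
          (twoPerD (TwoPerRing K) (xcl K) (ycl K) (Finsupp.single i 1))
          (Finsupp.single j 1) +
        (-1 : TwoPerRing K) ^ i •
          muProd (TwoPerRing K) (Finsupp.single i 1)
            (twoPerD (TwoPerRing K) (xcl K) (ycl K) (Finsupp.single j 1)) :=
  stmt_7_general (xcl K) (ycl K) 1 1 i j
end
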